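/- Let A, B, C be commutative rings with ring maps α: A → C and β: B → C, and let D = A ×_C B. Suppose M_A is a finitely presented A-module, M_B a finitely presented B-module, and ι: M_A ⊗_A C ≅ M_B ⊗_B C an isomorphism of C-modules. Then M := M_A ×_{M_B ⊗_B C} M_B (fiber product over ι) is a D-module, and if β is surjective and A, B, C, D fit in a Milnor patching square (D = A ×_C B with β surjective), and M_A, M_B are finite projective, then M is a finite projective D-module with M ⊗_D A ≅ M_A and M ⊗_D B ≅ M_B. -/

import Mathlib

open TensorProduct

/-!
A finite projective module is one with a finite dual basis `(fᵢ, xᵢ)`, i.e. `∑ i, fᵢ(m) xᵢ = m`. If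
`M_A` and `M_B` have dual bases with the same image over `C`, their members glue to a dual basis of
the fiber product, which is therefore finite projective; it maps to the given dual bases under the
two projections, which are therefore base changes.

To match dual bases, start from `(fᵢ, xᵢ)` for `M_A` and use surjectivity of `β` to lift its
image over `C` to functionals `gᵢ` and vectors `yᵢ` of `M_B`. The defect `h = id - ∑ i, gᵢ(-) yᵢ`
vanishes over `C` but not over `B`. Since `id = (id - h)(id + h) + h²`, adding `h yᵢ` to `yᵢ` and
appending `(k_j ∘ h, h w_j)`, for any dual basis `(k_j, w_j)` of `M_B`, repairs it without changing
anything over `C`; on the `A` side one appends zeros.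
-/

section DualBasis

open Module

variable {ι κ R M N : Type*} [Fintype ι] [Fintype κ] [CommSemiring R] [AddCommMonoid M] [Module R M]
  [AddCommMonoid N] [Module R N]

/-- A finite dual basis in the sense of the dual basis lemma for projective modules: the functionals
`f i` are coordinates with respect to the generating family `x`, which need not be linearly
independent. -/
def IsDualBasis (f : ι → Dual R M) (x : ι → M) : Prop :=
  ∀ m, ∑ i, f i m • x i = m

variable (R M) in
theorem exists_isDualBasis [Module.Finite R M] [Projective R M] :
    ∃ (n : ℕ) (f : Fin n → Dual R M) (x : Fin n → M), IsDualBasis f x := by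
  obtain ⟨n, p, s, -, -, hps⟩ := Module.Finite.exists_comp_eq_id_of_projective R M
  refine ⟨n, fun i => LinearMap.proj i ∘ₗ s, fun i => p (Pi.single i 1), fun m => ?_⟩
  calc ∑ i, s m i • p (Pi.single i 1) = p (s m) := by
        simp only [← map_smul, ← map_sum, ← pi_eq_sum_univ' (s m)]
    _ = m := LinearMap.congr_fun hps m

namespace IsDualBasis

variable {f : ι → Dual R M} {x : ι → M}

theorem one_mem_range_dualTensorHom (hx : IsDualBasis f x) :
    1 ∈ (dualTensorHom R M M).range :=
  ⟨∑ i, f i ⊗ₜ x i, LinearMap.ext fun m => by simpa using hx m⟩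

theorem finite (hx : IsDualBasis f x) : Module.Finite R M :=
  .of_one_mem_range_dualTensorHom hx.one_mem_range_dualTensorHom

theorem projective (hx : IsDualBasis f x) : Projective R M :=
  .of_one_mem_range_dualTensorHom hx.one_mem_range_dualTensorHom

theorem bijective_of_map {g : ι → Dual R N} {l : M →ₗ[R] N}
    (hx : IsDualBasis f x) (hlx : IsDualBasis g fun i => l (x i)) (hgl : ∀ i m, g i (l m) = f i m) :
    Function.Bijective l := by
  refine ⟨fun m m' hmm' => ?_, fun n => ⟨∑ i, g i n • x i, ?_⟩⟩
  · rw [← hx m, ← hx m']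
    simp only [← hgl, hmm']
  · simpa only [map_sum, map_smul] using hlx n

theorem sumElim_of_add_eq {g : ι → Dual R M} {y : ι → M} {k : κ → Dual R M} {w : κ → M}
    {h : End R M} (hw : IsDualBasis k w) (hgh : ∀ m, ∑ i, g i m • y i + h m = m) :
    IsDualBasis (Sum.elim g fun j => k j ∘ₗ h)
      (Sum.elim (fun i => y i + h (y i)) fun j => h (w j)) := by
  intro m
  have sum_h_w : ∑ j, k j (h m) • h (w j) = h (h m) := by
    simpa only [map_sum, map_smul] using congrArg h (hw (h m))
  calc ∑ s, (Sum.elim g (fun j => k j ∘ₗ h) s) m •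
        Sum.elim (fun i => y i + h (y i)) (fun j => h (w j)) s
      = ∑ i, g i m • y i + h (∑ i, g i m • y i) + h (h m) := by
        simp [Fintype.sum_sum_type, Finset.sum_add_distrib, sum_h_w]
    _ = ∑ i, g i m • y i + h (∑ i, g i m • y i + h m) := by rw [map_add, add_assoc]
    _ = m := by rw [hgh, hgh]

theorem sumElim_zero (hx : IsDualBasis f x) :
    IsDualBasis (Sum.elim f fun _ : κ => 0) (Sum.elim x fun _ => 0) := fun m => by
  simpa [Fintype.sum_sum_type] using hx m

section BaseChange

variable {S : Type*} [CommSemiring S] [Algebra R S] [Module S N] [IsScalarTower R S N]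
  {π : M →ₗ[R] N}

theorem baseChange (hx : IsDualBasis f x) (hπ : IsBaseChange S π) :
    IsDualBasis (fun i => hπ.toDual (f i)) fun i => π (x i) := by
  intro n
  induction n using hπ.inductionOn with
  | zero => simp
  | tmul m =>
    simp only [hπ.toDual_comp_apply, algebraMap_smul, ← map_smul, ← map_sum, hx m]
  | smul s n hn => simp only [map_smul, smul_assoc, ← Finset.smul_sum, hn]
  | add n n' hn hn' => simp only [map_add, add_smul, Finset.sum_add_distrib, hn, hn']

theorem isBaseChange_of_map {g : ι → Dual S N} (hx : IsDualBasis f x)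
    (hπx : IsDualBasis g fun i => π (x i)) (hgf : ∀ i m, g i (π m) = algebraMap R S (f i m)) :
    IsBaseChange S π := by
  have lift_bijective : Function.Bijective (π.liftBaseChange S) := by
    refine (hx.baseChange (TensorProduct.isBaseChange R M S)).bijective_of_map (g := g)
      (by simpa using hπx) fun i t => ?_
    refine LinearMap.congr_fun (f := g i ∘ₗ π.liftBaseChange S) ?_ t
    refine (TensorProduct.isBaseChange R M S).algHom_ext _ _ fun m => ?_
    rw [(TensorProduct.isBaseChange R M S).toDual_comp_apply]
    simp [hgf]
  exact .of_equiv (.ofBijective _ lift_bijective) (by simp)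

end BaseChange

end IsDualBasis

end DualBasis

section Lifting

open Module

variable {B C M P : Type*} [CommSemiring B] [CommSemiring C] [Algebra B C] [AddCommMonoid M]
  [Module B M] [AddCommMonoid P] [Module B P] [Module C P] [IsScalarTower B C P] {v : M →ₗ[B] P}

theorem surjective_of_isBaseChange (hv : IsBaseChange C v)
    (hBC : Function.Surjective (algebraMap B C)) : Function.Surjective v := by
  have hmk := hv.equiv.surjective.comp (TensorProduct.mk_surjective B M C hBC)
  convert hmk using 1
  ext m
  simp

theorem toDual_surjective_of_projective [Projective B M] (hv : IsBaseChange C v)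
    (hBC : Function.Surjective (algebraMap B C)) : Function.Surjective hv.toDual := by
  intro ψ
  obtain ⟨g, hg⟩ := Module.projective_lifting_property (Algebra.linearMap B C)
    (ψ.restrictScalars B ∘ₗ v) hBC
  refine ⟨g, hv.algHom_ext _ _ fun m => ?_⟩
  rw [hv.toDual_comp_apply]
  exact LinearMap.congr_fun hg m

end Lifting

section Matching

open Module

theorem IsDualBasis.exists_matching_isDualBasis {ι A B C M N P : Type*} [Fintype ι] [CommSemiring A]
    [CommRing B] [CommRing C] [Algebra A C] [Algebra B C] [AddCommMonoid M] [Module A M]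
    [AddCommGroup N] [Module B N] [Module.Finite B N] [Projective B N] [AddCommGroup P]
    [Module A P] [Module B P] [Module C P] [IsScalarTower A C P] [IsScalarTower B C P]
    {u : M →ₗ[A] P} {v : N →ₗ[B] P} {f : ι → Dual A M} {x : ι → M} (hx : IsDualBasis f x)
    (hu : IsBaseChange C u) (hv : IsBaseChange C v) (hBC : Function.Surjective (algebraMap B C)) :
    ∃ (n : ℕ) (F : ι ⊕ Fin n → Dual A M) (X : ι ⊕ Fin n → M) (G : ι ⊕ Fin n → Dual B N)
      (Y : ι ⊕ Fin n → N), IsDualBasis F X ∧ IsDualBasis G Y ∧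
        (∀ s, u (X s) = v (Y s)) ∧ ∀ s, hu.toDual (F s) = hv.toDual (G s) := by
  choose y hy using fun i => surjective_of_isBaseChange hv hBC (u (x i))
  choose g hg using fun i => toDual_surjective_of_projective hv hBC (hu.toDual (f i))
  obtain ⟨n, k, w, hw⟩ := exists_isDualBasis B N
  let h : End B N := LinearMap.id - ∑ i, (g i).smulRight (y i)
  have sum_add_h (m : N) : ∑ i, g i m • y i + h m = m := by simp [h]
  have v_h (m : N) : v (h m) = 0 := by
    have v_sum : v (∑ i, g i m • y i) = v m := by
      simpa [← hg, hy, hv.toDual_comp_apply] using hx.baseChange hu (v m)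
    rw [eq_sub_of_add_eq' (sum_add_h m), map_sub, v_sum, sub_self]
  refine ⟨n, _, _, _, _, hx.sumElim_zero, hw.sumElim_of_add_eq sum_add_h, ?_, ?_⟩
  · rintro (i | j) <;> simp [v_h, hy]
  · rintro (i | j)
    · exact (hg i).symm
    · refine hv.algHom_ext _ _ fun m => ?_
      calc hu.toDual 0 (v m) = hv.toDual (k j) (v (h m)) := by simp [v_h]
        _ = hv.toDual (k j ∘ₗ h) (v m) := by
          rw [hv.toDual_comp_apply, hv.toDual_comp_apply, LinearMap.comp_apply]

end Matching

section MilnorSquare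

open Module

/-- The fiber product `M ×_P N` of two linear maps, as a submodule of `M × N`. -/
def fiberProduct {D M N P : Type*} [Semiring D] [AddCommMonoid M] [Module D M] [AddCommMonoid N]
    [Module D N] [AddCommMonoid P] [Module D P] (u : M →ₗ[D] P) (v : N →ₗ[D] P) :
    Submodule D (M × N) :=
  LinearMap.eqLocus (u ∘ₗ LinearMap.fst D M N) (v ∘ₗ LinearMap.snd D M N)

/-- The square of algebra maps from `D` to `A` and `B` and on to `C` is cartesian, that is, it
identifies `D` with `A ×_C B`. -/
structure IsCartesianSquare (A B C D : Type*) [CommSemiring A] [CommSemiring B] [CommSemiring C]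
    [CommSemiring D] [Algebra A C] [Algebra B C] [Algebra D A] [Algebra D B] : Prop where
  injective : Function.Injective fun d : D => (algebraMap D A d, algebraMap D B d)
  range_eq : Set.range (fun d : D => (algebraMap D A d, algebraMap D B d)) =
    {p : A × B | algebraMap A C p.1 = algebraMap B C p.2}

namespace IsCartesianSquare

section Semiring

variable {ι A B C D M N P : Type*} [Fintype ι] [CommSemiring A] [CommSemiring B] [CommSemiring C]
  [CommSemiring D] [Algebra A C] [Algebra B C] [Algebra D A] [Algebra D B]
  [AddCommMonoid M] [Module A M] [Module D M] [IsScalarTower D A M]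
  [AddCommMonoid N] [Module B N] [Module D N] [IsScalarTower D B N]
  [AddCommMonoid P] [Module A P] [Module B P] [Module C P] [Module D P] [IsScalarTower A C P]
  [IsScalarTower B C P] [IsScalarTower D A P] [IsScalarTower D B P]
  {u : M →ₗ[A] P} {v : N →ₗ[B] P}

theorem exists_dual_fiberProduct (hD : IsCartesianSquare A B C D) (hu : IsBaseChange C u)
    (hv : IsBaseChange C v) {f : Dual A M} {g : Dual B N} (hfg : hu.toDual f = hv.toDual g) :
    ∃ φ : Dual D (fiberProduct (u.restrictScalars D) (v.restrictScalars D)),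
      ∀ m, algebraMap D A (φ m) = f m.1.1 ∧ algebraMap D B (φ m) = g m.1.2 := by
  have mem_range (m : fiberProduct (u.restrictScalars D) (v.restrictScalars D)) :
      (f m.1.1, g m.1.2) ∈ Set.range fun d : D => (algebraMap D A d, algebraMap D B d) := by
    have hm : u m.1.1 = v m.1.2 := m.2
    rw [hD.range_eq, Set.mem_ofPred_eq, ← hu.toDual_comp_apply, ← hv.toDual_comp_apply, hfg, hm]
  choose φ hφ using mem_range
  simp only [Prod.mk.injEq] at hφ
  refine ⟨⟨⟨φ, fun m m' => hD.injective ?_⟩, fun d m => hD.injective ?_⟩, hφ⟩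
  · simp [hφ]
  · simp [hφ, Algebra.smul_def]

theorem exists_isDualBasis_fiberProduct (hD : IsCartesianSquare A B C D) (hu : IsBaseChange C u)
    (hv : IsBaseChange C v) {f : ι → Dual A M} {g : ι → Dual B N}
    {x : ι → fiberProduct (u.restrictScalars D) (v.restrictScalars D)}
    (hf : IsDualBasis f fun i => (x i).1.1) (hg : IsDualBasis g fun i => (x i).1.2)
    (hfg : ∀ i, hu.toDual (f i) = hv.toDual (g i)) :
    ∃ φ : ι → Dual D (fiberProduct (u.restrictScalars D) (v.restrictScalars D)),
      IsDualBasis φ x ∧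
        ∀ i m, algebraMap D A (φ i m) = f i m.1.1 ∧ algebraMap D B (φ i m) = g i m.1.2 := by
  choose φ hφ using fun i => hD.exists_dual_fiberProduct hu hv (hfg i)
  refine ⟨φ, fun m => Subtype.ext (Prod.ext ?_ ?_), hφ⟩
  · simpa [Prod.fst_sum, ← fun i => (hφ i m).1] using hf m.1.1
  · simpa [Prod.snd_sum, ← fun i => (hφ i m).2] using hg m.1.2

end Semiring

variable {A B C D M N P : Type*} [CommSemiring A] [CommRing B] [CommRing C]
  [CommSemiring D] [Algebra A C] [Algebra B C] [Algebra D A] [Algebra D B]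
  [AddCommMonoid M] [Module A M] [Module D M] [IsScalarTower D A M]
  [AddCommGroup N] [Module B N] [Module D N] [IsScalarTower D B N]
  [AddCommGroup P] [Module A P] [Module B P] [Module C P] [Module D P] [IsScalarTower A C P]
  [IsScalarTower B C P] [IsScalarTower D A P] [IsScalarTower D B P]
  {u : M →ₗ[A] P} {v : N →ₗ[B] P}

theorem finite_projective_isBaseChange_fiberProduct (hD : IsCartesianSquare A B C D)
    (hBC : Function.Surjective (algebraMap B C)) (hu : IsBaseChange C u) (hv : IsBaseChange C v)
    [Module.Finite A M] [Projective A M] [Module.Finite B N] [Projective B N] :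
    let M' := fiberProduct (u.restrictScalars D) (v.restrictScalars D)
    Module.Finite D M' ∧ Projective D M' ∧ IsBaseChange A (LinearMap.fst D M N ∘ₗ M'.subtype) ∧
      IsBaseChange B (LinearMap.snd D M N ∘ₗ M'.subtype) := by
  intro M'
  obtain ⟨m, f, x, hx⟩ := exists_isDualBasis A M
  obtain ⟨n, F, X, G, Y, hX, hY, hXY, hFG⟩ := hx.exists_matching_isDualBasis hu hv hBC
  obtain ⟨φ, hφ, hφFG⟩ :=
    hD.exists_isDualBasis_fiberProduct (x := fun s => ⟨(X s, Y s), hXY s⟩) hu hv hX hY hFG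
  exact ⟨hφ.finite, hφ.projective, hφ.isBaseChange_of_map hX fun s m => (hφFG s m).1.symm,
    hφ.isBaseChange_of_map hY fun s m => (hφFG s m).2.symm⟩

end IsCartesianSquare

end MilnorSquare

/-- (Milnor patching.) Let `D = A ×_C B` be a Milnor square of commutative
rings (projections `pA, pB`, maps `α : A → C`, `β : B → C` with `β` surjective, the pairing
`d ↦ (pA d, pB d)` injective with image the matching pairs). Let `M_A`, `M_B` be finite
projective (finitely presented) modules over `A`, `B` and `ι : M_A ⊗_A C ≅ M_B ⊗_B C` an
isomorphism of `C`-modules. Then the fiber product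
`M = {(x, y) : M_A × M_B | ι(1 ⊗ x) = 1 ⊗ y}` is a `D`-submodule of `M_A × M_B`, it is a
finite projective `D`-module, and `M ⊗_D A ≅ M_A`, `M ⊗_D B ≅ M_B`. -/
theorem statement15 (A B C D : Type*) [CommRing A] [CommRing B] [CommRing C] [CommRing D]
    (α : A →+* C) (β : B →+* C) (pA : D →+* A) (pB : D →+* B)
    (hcomm : α.comp pA = β.comp pB)
    (hinj : Function.Injective (fun d : D => (pA d, pB d)))
    (hrange : Set.range (fun d : D => (pA d, pB d)) = {p : A × B | α p.1 = β p.2})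
    (hβ : Function.Surjective β)
    (M_A : Type*) [AddCommGroup M_A] [Module A M_A]
      [Module.FinitePresentation A M_A] [Module.Projective A M_A] [Module.Finite A M_A]
    (M_B : Type*) [AddCommGroup M_B] [Module B M_B]
      [Module.FinitePresentation B M_B] [Module.Projective B M_B] [Module.Finite B M_B] :
    letI : Algebra A C := α.toAlgebra
    letI : Algebra B C := β.toAlgebra
    letI : Algebra D A := pA.toAlgebra
    letI : Algebra D B := pB.toAlgebra
    letI : Module D M_A := Module.compHom M_A pA
    letI : Module D M_B := Module.compHom M_B pB
    ∀ ι : (C ⊗[A] M_A) ≃ₗ[C] (C ⊗[B] M_B),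
      ∃ M' : Submodule D (M_A × M_B),
        (↑M' : Set (M_A × M_B))
            = {q : M_A × M_B | ι ((1 : C) ⊗ₜ[A] q.1) = (1 : C) ⊗ₜ[B] q.2} ∧
        Module.Finite D M' ∧ Module.Projective D M' ∧
        Nonempty ((A ⊗[D] M') ≃ₗ[A] M_A) ∧ Nonempty ((B ⊗[D] M') ≃ₗ[B] M_B) := by
  intro ι
  let : Algebra A C := α.toAlgebra
  let : Algebra B C := β.toAlgebra
  let : Algebra D A := pA.toAlgebra
  let : Algebra D B := pB.toAlgebra
  let : Module D M_A := Module.compHom M_A pA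
  let : Module D M_B := Module.compHom M_B pB
  let : Algebra D C := (α.comp pA).toAlgebra
  have : IsScalarTower D A C := .of_algebraMap_eq' rfl
  have : IsScalarTower D B C := .of_algebraMap_eq' hcomm
  have : IsScalarTower D A M_A := ⟨fun d a x => mul_smul (pA d) a x⟩
  have : IsScalarTower D B M_B := ⟨fun d b y => mul_smul (pB d) b y⟩
  have : SMulCommClass B A C := ⟨fun b a c => mul_left_comm (β b) (α a) c⟩
  have : SMulCommClass A B C := .symm ..
  let u : M_A →ₗ[A] C ⊗[B] M_B := ι.restrictScalars A ∘ₗ TensorProduct.mk A C M_A 1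
  let v : M_B →ₗ[B] C ⊗[B] M_B := TensorProduct.mk B C M_B 1
  have hD : IsCartesianSquare A B C D := ⟨hinj, hrange⟩
  have hu : IsBaseChange C u := .of_equiv ι fun _ => rfl
  have hv : IsBaseChange C v := TensorProduct.isBaseChange B M_B C
  obtain ⟨hfin, hproj, hA, hB⟩ := hD.finite_projective_isBaseChange_fiberProduct hβ hu hv
  exact ⟨fiberProduct (u.restrictScalars D) (v.restrictScalars D), rfl, hfin, hproj,
    ⟨hA.equiv⟩, ⟨hB.equiv⟩⟩
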